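/- Let (λ_k)_{k≥1} be a strictly increasing sequence of positive real numbers with ∑_{k≥1} 1/λ_k < ∞, and let T > 0. Then for every n ∈ ℕ⁺, the function t ↦ e^{−λ_n t} on (0,T) does not belong to the closure in L²(0,T) of the linear span of the functions {t ↦ e^{−λ_k t} : k ∈ ℕ⁺, k ≠ n}. -/

import Mathlib

open MeasureTheory Real Set

/-!
Write `τ_a f = f (· + a)`. It multiplies `e^{-μt}` by `e^{-μa}`, so `τ_a - e^{-λ_k a}` kills the
`k`-th exponential while shortening the interval by `a`. This removes finitely many exponentials,
but its norm `1 + e^{-λ_k a}` is too large compared with its effect on `e^{-λ_n t}` to be iterated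
infinitely often. For the tail, take `a = log 10 / λ_k`, so that `e^{-λ_k a} = 1/10`, and use
`(τ_a + 1)(τ_a - 1/10)`: its symbol `(z + 1)(z - 1/10)` has its maximum modulus `9/5` on the unit
circle at `z = 1`, hence after division by `9/5` it is a contraction of `L²(ℝ)` which multiplies
`e^{-λ_n t}` by at least `1 - 2 λ_n a`. Since `∑ 1/λ_k < ∞`, both the total loss of length and the
total loss in the distance are small over a tail of the sequence.
-/

open Metric Submodule

section Distance

variable {E F : Type*} [SeminormedAddCommGroup E] [NormedSpace ℝ E]
  [SeminormedAddCommGroup F] [NormedSpace ℝ F]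

lemma abs_mul_infDist_le_norm_smul_sub (W : Submodule ℝ F) (m : ℝ) (y : F) {w : F} (hw : w ∈ W) :
    |m| * infDist y W ≤ ‖m • y - w‖ := by
  rcases eq_or_ne m 0 with rfl | hm
  · simp
  · calc |m| * infDist y W ≤ |m| * dist y (m⁻¹ • w) := by
          gcongr
          exact infDist_le_dist_of_mem (W.smul_mem _ hw)
      _ = ‖m • y - w‖ := by
          rw [dist_eq_norm, ← Real.norm_eq_abs, ← norm_smul, smul_sub, smul_inv_smul₀ hm]

lemma abs_mul_infDist_le_opNorm_mul_infDist (G : E →L[ℝ] F) {V : Submodule ℝ E}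
    {W : Submodule ℝ F} (hVW : V ≤ W.comap G.toLinearMap) {x : E} {y : F} {m : ℝ}
    (hxy : G x - m • y ∈ W) :
    |m| * infDist y W ≤ ‖G‖ * infDist x V := by
  rw [infDist_eq_iInf (s := (V : Set E)), Real.mul_iInf_of_nonneg (norm_nonneg G)]
  refine le_ciInf fun v => ?_
  have hmem : G v - (G x - m • y) ∈ W := W.sub_mem (hVW v.2) hxy
  calc |m| * infDist y W ≤ ‖m • y - (G v - (G x - m • y))‖ :=
        abs_mul_infDist_le_norm_smul_sub W m y hmem
    _ = ‖G (x - v)‖ := by rw [map_sub]; congr 1; abel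
    _ ≤ ‖G‖ * dist x v := by rw [dist_eq_norm]; exact G.le_opNorm _

end Distance

section Isometry

variable {E : Type*} [NormedAddCommGroup E] [InnerProductSpace ℝ E]

lemma norm_map_sub_smul_sq (U : E →ₗᵢ[ℝ] E) (r : ℝ) (x : E) :
    ‖U x - r • x‖ ^ 2 = (1 - r) ^ 2 * ‖x‖ ^ 2 + r * ‖U x - x‖ ^ 2 := by
  rw [norm_sub_sq_real, norm_sub_sq_real, real_inner_smul_right, norm_smul, U.norm_map, mul_pow,
    Real.norm_eq_abs, sq_abs]
  ring

lemma norm_map_add_sq (U : E →ₗᵢ[ℝ] E) (y : E) :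
    ‖U y + y‖ ^ 2 = 4 * ‖y‖ ^ 2 - ‖U y - y‖ ^ 2 := by
  have := parallelogram_law_with_norm ℝ (U y) y
  rw [U.norm_map] at this
  linarith

-- The operator form of `|z + 1| |z - r| ≤ 2 (1 - r)` on the unit circle.
lemma norm_add_one_mul_sub_smul_one_le (U : E →ₗᵢ[ℝ] E) {r : ℝ} (hr : 0 ≤ r) (hr1 : r ≤ 1)
    (hr4 : 4 * r ≤ (1 - r) ^ 2) :
    ‖(U.toContinuousLinearMap + 1) * (U.toContinuousLinearMap - r • 1)‖ ≤ 2 * (1 - r) := by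
  refine ContinuousLinearMap.opNorm_le_bound _ (by linarith) fun x => ?_
  set y := U x - r • x
  set z := U x - x
  have hyz : U y - y = U z - r • z := by
    simp only [y, z, map_sub, map_smul]
    module
  have hlower : (1 - r) ^ 2 * ‖z‖ ^ 2 ≤ ‖U y - y‖ ^ 2 := by
    rw [hyz, norm_map_sub_smul_sq]
    exact le_add_of_nonneg_right (by positivity)
  refine le_of_sq_le_sq ?_ (mul_nonneg (by linarith) (norm_nonneg x))
  calc ‖U y + y‖ ^ 2 = 4 * ‖y‖ ^ 2 - ‖U y - y‖ ^ 2 := norm_map_add_sq U y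
    _ ≤ 4 * ((1 - r) ^ 2 * ‖x‖ ^ 2 + r * ‖z‖ ^ 2) - (1 - r) ^ 2 * ‖z‖ ^ 2 := by
        rw [← norm_map_sub_smul_sq]; linarith
    _ ≤ (2 * (1 - r) * ‖x‖) ^ 2 := by
        linarith [mul_le_mul_of_nonneg_right hr4 (sq_nonneg ‖z‖)]

end Isometry

section Restriction

variable {α F : Type*} [MeasurableSpace α] {μ : Measure α} [NormedAddCommGroup F]
  [NormedSpace ℝ F] {p : ENNReal} [Fact (1 ≤ p)] {s : Set α}

lemma LpToLpRestrictCLM_surjective (hs : MeasurableSet s) :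
    Function.Surjective (LpToLpRestrictCLM α F ℝ μ p s) := by
  intro g
  have hg : MemLp (s.indicator g) p μ := (memLp_indicator_iff_restrict hs).2 (Lp.memLp g)
  refine ⟨hg.toLp, Lp.ext ?_⟩
  filter_upwards [LpToLpRestrictCLM_coeFn ℝ s hg.toLp, ae_restrict_of_ae hg.coeFn_toLp,
    ae_restrict_mem hs] with t hrestrict hind ht
  rw [hrestrict, hind, indicator_of_mem ht]

variable (F μ p s) in
/-- The closed subspace of the functions in `L^p(μ)` that vanish almost everywhere on `s`. Working
modulo this subspace amounts to working in `L^p(s)`, without changing the ambient space. -/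
noncomputable def vanishingOn : Submodule ℝ (Lp F p μ) :=
  (LpToLpRestrictCLM α F ℝ μ p s).ker

lemma mem_vanishingOn {f : Lp F p μ} : f ∈ vanishingOn F μ p s ↔ f =ᵐ[μ.restrict s] 0 := by
  rw [vanishingOn, LinearMap.mem_ker, Lp.eq_zero_iff_ae_eq_zero]
  exact ⟨(LpToLpRestrictCLM_coeFn ℝ s f).symm.trans, (LpToLpRestrictCLM_coeFn ℝ s f).trans⟩

lemma isClosed_vanishingOn : IsClosed (vanishingOn F μ p s : Set (Lp F p μ)) :=
  (LpToLpRestrictCLM α F ℝ μ p s).isClosed_ker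

end Restriction

section Translation

/-- The space `L²(ℝ)` of real-valued functions. -/
abbrev L2Line : Type := Lp ℝ 2 (volume : Measure ℝ)

/-- The functions in `L²(ℝ)` that vanish on `(0,L)`; the quotient by them is `L²(0,L)`. -/
noncomputable abbrev vanishingBelow (L : ℝ) : Submodule ℝ L2Line :=
  vanishingOn ℝ volume 2 (Ioo 0 L)

lemma vanishingBelow_anti {L M : ℝ} (hL : L ≤ M) : vanishingBelow M ≤ vanishingBelow L :=
  fun _ hf => mem_vanishingOn.2 <|
    ae_restrict_of_ae_restrict_of_subset (Ioo_subset_Ioo_right hL) (mem_vanishingOn.1 hf)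

/-- Translation to the left by `a`, sending `f` to `f (· + a)`, as an isometry of `L²(ℝ)`. -/
noncomputable def translateL2 (a : ℝ) : L2Line →ₗᵢ[ℝ] L2Line :=
  Lp.compMeasurePreservingₗᵢ ℝ (· + a) (measurePreserving_add_right volume a)

lemma coeFn_translateL2 (a : ℝ) (f : L2Line) : translateL2 a f =ᵐ[volume] fun t => f (t + a) :=
  Lp.coeFn_compMeasurePreserving f (measurePreserving_add_right volume a)

lemma ae_Ioo_add_right {a L M : ℝ} (ha : 0 ≤ a) (hM : L + a ≤ M) {P : ℝ → Prop}
    (hP : ∀ᵐ t ∂volume.restrict (Ioo 0 M), P t) : ∀ᵐ t ∂volume.restrict (Ioo 0 L), P (t + a) := by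
  have hmaps : MapsTo (· + a) (Ioo 0 L) (Ioo 0 M) := fun t ht =>
    ⟨by linarith [ht.1], by linarith [ht.2]⟩
  exact ((measurePreserving_add_right volume a).quasiMeasurePreserving.restrict hmaps).ae hP

lemma translateL2_mem_vanishingBelow {a L M : ℝ} (ha : 0 ≤ a) (hM : L + a ≤ M) {f : L2Line}
    (hf : f ∈ vanishingBelow M) : translateL2 a f ∈ vanishingBelow L := by
  rw [mem_vanishingOn] at hf ⊢
  filter_upwards [ae_restrict_of_ae (coeFn_translateL2 a f), ae_Ioo_add_right ha hM hf]
    with t htranslate hzero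
  rw [htranslate, hzero, Pi.zero_apply, Pi.zero_apply]

lemma translateL2_sub_exp_smul_mem_vanishingBelow {a L M μ : ℝ} (ha : 0 ≤ a) (hM : L + a ≤ M)
    {f : L2Line} (hf : f =ᵐ[volume.restrict (Ioo 0 M)] fun t => exp (-μ * t)) :
    translateL2 a f - exp (-μ * a) • f ∈ vanishingBelow L := by
  have hfL : f =ᵐ[volume.restrict (Ioo 0 L)] fun t => exp (-μ * t) :=
    ae_restrict_of_ae_restrict_of_subset (Ioo_subset_Ioo_right (by linarith)) hf
  rw [mem_vanishingOn]
  filter_upwards [ae_restrict_of_ae (coeFn_translateL2 a f), ae_Ioo_add_right ha hM hf, hfL,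
    ae_restrict_of_ae (Lp.coeFn_sub (translateL2 a f) (exp (-μ * a) • f)),
    ae_restrict_of_ae (Lp.coeFn_smul (exp (-μ * a)) f)] with t htranslate hshift hexp hsub hsmul
  rw [hsub, Pi.sub_apply, hsmul, Pi.smul_apply, htranslate, hshift, hexp, smul_eq_mul, ← exp_add,
    Pi.zero_apply, sub_eq_zero]
  ring_nf

lemma notMem_vanishingBelow_of_ae_eq_exp {L μ : ℝ} (hL : 0 < L) {f : L2Line}
    (hf : f =ᵐ[volume.restrict (Ioo 0 L)] fun t => exp (-μ * t)) : f ∉ vanishingBelow L := by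
  intro hzero
  have hfalse : ∀ᵐ _ ∂volume.restrict (Ioo 0 L), False := by
    filter_upwards [hf, mem_vanishingOn.1 hzero] with t hexp h0
    exact (exp_pos (-μ * t)).ne' (hexp.symm.trans h0)
  rw [Filter.eventually_false_iff_eq_bot, ae_eq_bot, Measure.restrict_eq_zero, Real.volume_Ioo,
    ENNReal.ofReal_eq_zero] at hfalse
  linarith

end Translation

section Multiplier

variable {ι : Type*} {e : ι → L2Line} {m m' : ι → ℝ} {L M K : ℝ}

/-- An operator on `L²(ℝ)` that induces a map `L²(0,M) → L²(0,L)` under which each `e k`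
is multiplied by `m k`. -/
structure IsMultiplier (e : ι → L2Line) (G : L2Line →L[ℝ] L2Line) (m : ι → ℝ) (M L : ℝ) :
    Prop where
  map_vanishing : vanishingBelow M ≤ (vanishingBelow L).comap G.toLinearMap
  map_sub_smul_mem : ∀ k, G (e k) - m k • e k ∈ vanishingBelow L

lemma IsMultiplier.mul {G G' : L2Line →L[ℝ] L2Line} (hG' : IsMultiplier e G' m' L K)
    (hG : IsMultiplier e G m M L) : IsMultiplier e (G' * G) (m' * m) M K where
  map_vanishing _ hf := hG'.map_vanishing (hG.map_vanishing hf)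
  map_sub_smul_mem k := by
    have hsplit : (G' * G) (e k) - (m' * m) k • e k =
        G' (G (e k) - m k • e k) + m k • (G' (e k) - m' k • e k) := by
      simp only [mul_apply_eq_comp, Pi.mul_apply, map_sub, map_smul]
      module
    rw [hsplit]
    exact add_mem (hG'.map_vanishing (hG.map_sub_smul_mem k))
      (smul_mem _ _ (hG'.map_sub_smul_mem k))

lemma isMultiplier_translateL2_sub_smul_one {lam : ι → ℝ} {a : ℝ} (ha : 0 ≤ a) (hM : L + a ≤ M)
    (he : ∀ k, e k =ᵐ[volume.restrict (Ioo 0 M)] fun t => exp (-lam k * t)) (r : ℝ) :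
    IsMultiplier e ((translateL2 a).toContinuousLinearMap - r • 1)
      (fun k => exp (-lam k * a) - r) M L where
  map_vanishing _ hf := sub_mem (translateL2_mem_vanishingBelow ha hM hf)
    (smul_mem _ _ (vanishingBelow_anti (by linarith) hf))
  map_sub_smul_mem k := by
    convert! translateL2_sub_exp_smul_mem_vanishingBelow ha hM (he k) using 1
    simp only [sub_apply, smul_apply, one_apply_eq_self, LinearIsometry.coe_toContinuousLinearMap]
    module

end Multiplier

section SpanDistance

variable {ι : Type*} {e : ι → L2Line} {lam : ι → ℝ} {S S' : Set ι} {L M T : ℝ} {n k : ι}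

/-- The distance in `L²(0,L)` from `e n` to the span of the `e k` with `k ∈ S`. -/
noncomputable def distSpan (e : ι → L2Line) (n : ι) (S : Set ι) (L : ℝ) : ℝ :=
  infDist (e n) (span ℝ (e '' S) ⊔ vanishingBelow L : Submodule ℝ L2Line)

lemma distSpan_nonneg : 0 ≤ distSpan e n S L := infDist_nonneg

lemma distSpan_anti (hS : S ⊆ S') : distSpan e n S' L ≤ distSpan e n S L :=
  infDist_le_infDist_of_subset
    (SetLike.coe_subset_coe.2 (sup_le_sup_right (span_mono (image_mono hS)) _))
    (Submodule.nonempty _)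

lemma distSpan_mono (hL : L ≤ M) : distSpan e n S L ≤ distSpan e n S M :=
  infDist_le_infDist_of_subset
    (SetLike.coe_subset_coe.2 (sup_le_sup_left (vanishingBelow_anti hL) _))
    (Submodule.nonempty _)

lemma le_distSpan_of_forall_finset {δ : ℝ}
    (h : ∀ J : Finset ι, ↑J ⊆ S → δ ≤ distSpan e n J L) : δ ≤ distSpan e n S L := by
  refine (le_infDist (Submodule.nonempty _)).2 fun v hv => ?_
  obtain ⟨s, hs, w, hw, rfl⟩ := mem_sup.1 hv
  obtain ⟨c, hc, rfl⟩ := (Finsupp.mem_span_image_iff_linearCombination ℝ).1 hs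
  have hmem : Finsupp.linearCombination ℝ e c ∈ span ℝ (e '' c.support) :=
    (Finsupp.mem_span_image_iff_linearCombination ℝ).2
      ⟨c, (Finsupp.mem_supported ℝ c).2 Subset.rfl, rfl⟩
  exact (h c.support ((Finsupp.mem_supported ℝ c).1 hc)).trans
    (infDist_le_dist_of_mem (add_mem_sup hmem hw))

lemma IsMultiplier.abs_mul_distSpan_le_insert {G : L2Line →L[ℝ] L2Line} {m : ι → ℝ}
    (hG : IsMultiplier e G m M L) (hk : m k = 0) :
    |m n| * distSpan e n S L ≤ ‖G‖ * distSpan e n (insert k S) M := by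
  refine abs_mul_infDist_le_opNorm_mul_infDist G ?_ (mem_sup_right (hG.map_sub_smul_mem n))
  have hmap (j : ι) : G (e j) = m j • e j + (G (e j) - m j • e j) := by abel
  refine sup_le (span_le.2 ?_) (hG.map_vanishing.trans (comap_mono le_sup_right))
  rintro _ ⟨j, rfl | hj, rfl⟩
  · simpa [hk] using mem_sup_right (hG.map_sub_smul_mem j)
  · rw [SetLike.mem_coe, mem_comap, ContinuousLinearMap.coe_coe, hmap]
    exact add_mem_sup (smul_mem _ _ (subset_span (mem_image_of_mem e hj))) (hG.map_sub_smul_mem j)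

lemma distSpan_empty_pos (hL : 0 < L) {μ : ℝ}
    (he : e n =ᵐ[volume.restrict (Ioo 0 L)] fun t => exp (-μ * t)) : 0 < distSpan e n ∅ L := by
  rw [distSpan, image_empty, span_empty, bot_sup_eq]
  exact (isClosed_vanishingOn.notMem_iff_infDist_pos (Submodule.nonempty _)).1
    (notMem_vanishingBelow_of_ae_eq_exp hL he)

lemma distSpan_insert_pos
    (he : ∀ k, e k =ᵐ[volume.restrict (Ioo 0 M)] fun t => exp (-lam k * t))
    (hk : lam k ≠ lam n) (hLM : L < M) (hpos : 0 < distSpan e n S L) :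
    0 < distSpan e n (insert k S) M := by
  have ha : 0 < M - L := sub_pos.2 hLM
  have hmul := isMultiplier_translateL2_sub_smul_one (L := L) ha.le (by linarith) he
    (exp (-lam k * (M - L)))
  have hn : exp (-lam n * (M - L)) - exp (-lam k * (M - L)) ≠ 0 := by
    rw [sub_ne_zero, exp_injective.ne_iff, (mul_left_injective₀ ha.ne').ne_iff,
      neg_injective.ne_iff]
    exact hk.symm
  have hle := hmul.abs_mul_distSpan_le_insert (n := n) (S := S) (sub_self _)
  exact pos_of_mul_pos_right ((mul_pos (abs_pos.2 hn) hpos).trans_le hle) (norm_nonneg _)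

lemma distSpan_finset_union_pos
    (he : ∀ k, e k =ᵐ[volume.restrict (Ioo 0 T)] fun t => exp (-lam k * t))
    (hpos : 0 < distSpan e n S L) (A : Finset ι) (hA : ∀ k ∈ A, lam k ≠ lam n) (hLM : L < M)
    (hMT : M ≤ T) : 0 < distSpan e n (A ∪ S) M := by
  classical
  induction A using Finset.induction_on generalizing M with
  | empty => simpa using hpos.trans_le (distSpan_mono hLM.le)
  | insert k A _ ih =>
    obtain ⟨M', hLM', hM'M⟩ := exists_between hLM
    rw [Finset.coe_insert, insert_union]
    exact distSpan_insert_pos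
      (fun j => ae_restrict_of_ae_restrict_of_subset (Ioo_subset_Ioo_right hMT) (he j))
      (hA k (Finset.mem_insert_self k A)) hM'M
      (ih (fun j hj => hA j (Finset.mem_insert_of_mem hj)) hLM' (hM'M.le.trans hMT))

lemma one_sub_two_mul_le_exp_add_one_mul_exp_sub {y : ℝ} (hy : 0 ≤ y) :
    9 / 5 * (1 - 2 * y) ≤ (exp (-y) + 1) * (exp (-y) - 1 / 10) := by
  nlinarith [one_sub_le_exp_neg y, sq_nonneg (exp (-y) - 1)]

lemma one_sub_mul_distSpan_le_insert (hk : 0 < lam k) (hn : 0 ≤ lam n)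
    (hM : L + 2 * log 10 / lam k ≤ M)
    (he : ∀ k, e k =ᵐ[volume.restrict (Ioo 0 M)] fun t => exp (-lam k * t)) :
    (1 - lam n * (2 * log 10 / lam k)) * distSpan e n S L ≤ distSpan e n (insert k S) M := by
  set a := log 10 / lam k with ha
  have hlen : 2 * log 10 / lam k = 2 * a := mul_div_assoc _ _ _
  rw [hlen] at hM ⊢
  have ha0 : 0 ≤ a := div_nonneg (log_nonneg (by norm_num)) hk.le
  have hzero : exp (-lam k * a) - 1 / 10 = 0 := by
    rw [ha, neg_mul, mul_div_cancel₀ _ hk.ne', exp_neg, exp_log (by norm_num)]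
    norm_num
  have hsub := isMultiplier_translateL2_sub_smul_one (L := L + a) ha0 (by linarith) he (1 / 10)
  have hadd := isMultiplier_translateL2_sub_smul_one (L := L) (M := L + a) ha0 le_rfl
    (fun j => ae_restrict_of_ae_restrict_of_subset (Ioo_subset_Ioo_right (by linarith)) (he j)) (-1)
  have hle := (hadd.mul hsub).abs_mul_distSpan_le_insert (n := n) (k := k) (S := S)
    (by simp only [Pi.mul_apply, hzero, mul_zero])
  have hnorm := norm_add_one_mul_sub_smul_one_le (translateL2 a) (r := 1 / 10)
    (by norm_num) (by norm_num) (by norm_num)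
  have hsymbol := one_sub_two_mul_le_exp_add_one_mul_exp_sub (mul_nonneg hn ha0)
  simp only [neg_smul, one_smul, sub_neg_eq_add, Pi.mul_apply, neg_mul] at hle
  have hscaled : 9 / 5 * (1 - 2 * (lam n * a)) * distSpan e n S L ≤
      9 / 5 * distSpan e n (insert k S) M := calc
    _ ≤ |(exp (-(lam n * a)) + 1) * (exp (-(lam n * a)) - 1 / 10)| * distSpan e n S L := by
        gcongr
        exacts [distSpan_nonneg, hsymbol.trans (le_abs_self _)]
    _ ≤ _ := hle
    _ ≤ 9 / 5 * distSpan e n (insert k S) M := by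
        gcongr
        exacts [distSpan_nonneg, hnorm.trans (by norm_num)]
  linarith

lemma one_sub_mul_sum_mul_distSpan_le (hpos : ∀ k, 0 < lam k)
    (he : ∀ k, e k =ᵐ[volume.restrict (Ioo 0 T)] fun t => exp (-lam k * t)) (J : Finset ι)
    (hM : L + ∑ k ∈ J, 2 * log 10 / lam k ≤ M) (hMT : M ≤ T) :
    (1 - lam n * ∑ k ∈ J, 2 * log 10 / lam k) * distSpan e n ∅ L ≤ distSpan e n J M := by
  classical
  have hterm (k : ι) : 0 ≤ 2 * log 10 / lam k :=
    div_nonneg (mul_nonneg two_pos.le (log_nonneg (by norm_num))) (hpos k).le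
  induction J using Finset.induction_on generalizing M with
  | empty => simpa using distSpan_mono (by simpa using hM)
  | insert k J hk ih =>
    rw [Finset.sum_insert hk] at hM ⊢
    set w := 2 * log 10 / lam k
    set W := ∑ j ∈ J, 2 * log 10 / lam j
    have hw : 0 ≤ lam n * w := mul_nonneg (hpos n).le (hterm k)
    have hW : 0 ≤ lam n * W := mul_nonneg (hpos n).le (Finset.sum_nonneg fun j _ => hterm j)
    have hstep : (1 - lam n * w) * distSpan e n J (M - w) ≤ distSpan e n (insert k J) M :=
      one_sub_mul_distSpan_le_insert (hpos k) (hpos n).le (sub_add_cancel M w).le fun j =>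
        ae_restrict_of_ae_restrict_of_subset (Ioo_subset_Ioo_right hMT) (he j)
    have hrest : (1 - lam n * W) * distSpan e n ∅ L ≤ distSpan e n J (M - w) :=
      ih (by linarith) (by linarith [hterm k])
    rw [Finset.coe_insert]
    rcases le_total (lam n * w) 1 with hw1 | hw1
    · calc (1 - lam n * (w + W)) * distSpan e n ∅ L
          ≤ (1 - lam n * w) * (1 - lam n * W) * distSpan e n ∅ L := by
            gcongr
            · exact distSpan_nonneg
            · linarith [mul_nonneg hw hW]
        _ ≤ (1 - lam n * w) * distSpan e n J (M - w) := by
            rw [mul_assoc]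
            exact mul_le_mul_of_nonneg_left hrest (sub_nonneg.2 hw1)
        _ ≤ distSpan e n (insert k J) M := hstep
    · exact (mul_nonpos_of_nonpos_of_nonneg (by linarith) distSpan_nonneg).trans distSpan_nonneg

lemma exists_finset_distSpan_compl_pos (hpos : ∀ k, 0 < lam k)
    (hsum : Summable fun k => 1 / lam k) (hT : 0 < T)
    (he : ∀ k, e k =ᵐ[volume.restrict (Ioo 0 T)] fun t => exp (-lam k * t)) (n : ι) :
    ∃ A : Finset ι, 0 < distSpan e n (↑A)ᶜ T := by
  obtain ⟨L, hL, hLT⟩ := exists_between hT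
  have hε : 0 < min (T - L) (1 / (2 * lam n)) :=
    lt_min (sub_pos.2 hLT) (one_div_pos.2 (mul_pos two_pos (hpos n)))
  have hsum' : Summable fun k => 2 * log 10 / lam k := by
    simpa only [mul_one_div] using hsum.mul_left (2 * log 10)
  obtain ⟨A, hA⟩ := summable_iff_vanishing_norm.1 hsum' _ hε
  have hL_pos : 0 < distSpan e n ∅ L := distSpan_empty_pos hL
    (ae_restrict_of_ae_restrict_of_subset (Ioo_subset_Ioo_right hLT.le) (he n))
  refine ⟨A, (half_pos hL_pos).trans_le (le_distSpan_of_forall_finset fun J hJ => ?_)⟩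
  have hJA : Disjoint J A := Finset.disjoint_coe.1 (disjoint_left.2 hJ)
  obtain ⟨hlen, hloss⟩ := lt_min_iff.1 ((le_abs_self _).trans_lt (hA J hJA))
  rw [lt_div_iff₀ (mul_pos two_pos (hpos n))] at hloss
  calc distSpan e n ∅ L / 2
      ≤ (1 - lam n * ∑ k ∈ J, 2 * log 10 / lam k) * distSpan e n ∅ L := by
        rw [div_eq_inv_mul]
        gcongr
        linarith
    _ ≤ distSpan e n J T := one_sub_mul_sum_mul_distSpan_le hpos he J (by linarith) le_rfl

lemma distSpan_compl_singleton_pos (hpos : ∀ k, 0 < lam k)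
    (hsum : Summable fun k => 1 / lam k) (hT : 0 < T)
    (he : ∀ k, e k =ᵐ[volume.restrict (Ioo 0 T)] fun t => exp (-lam k * t))
    (hn : ∀ k, k ≠ n → lam k ≠ lam n) : 0 < distSpan e n {n}ᶜ T := by
  classical
  obtain ⟨L, hL, hLT⟩ := exists_between hT
  obtain ⟨A, hA⟩ := exists_finset_distSpan_compl_pos hpos hsum hL
    (fun k => ae_restrict_of_ae_restrict_of_subset (Ioo_subset_Ioo_right hLT.le) (he k)) n
  have hunion := distSpan_finset_union_pos he hA (A.erase n)
    (fun k hk => hn k (Finset.ne_of_mem_erase hk)) hLT le_rfl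
  refine hunion.trans_le (distSpan_anti fun k hk => ?_)
  by_cases hkA : k ∈ A
  · exact Or.inl (Finset.mem_coe.2 (Finset.mem_erase.2 ⟨hk, hkA⟩))
  · exact Or.inr hkA

end SpanDistance

lemma mem_closure_sup_ker_of_map_mem_closure {E F : Type*} [NormedAddCommGroup E]
    [NormedSpace ℝ E] [CompleteSpace E] [NormedAddCommGroup F] [NormedSpace ℝ F] [CompleteSpace F]
    {R : E →L[ℝ] F} (hR : Function.Surjective R) {V : Submodule ℝ E} {x : E}
    (hx : R x ∈ closure (V.map R.toLinearMap : Set F)) :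
    x ∈ closure ((V ⊔ R.ker : Submodule ℝ E) : Set E) := by
  rw [← comap_map_eq]
  exact (R.isOpenMap hR).preimage_closure_subset_closure_preimage hx

theorem stmt3_general {ι : Type*} {lam : ι → ℝ} (hpos : ∀ k, 0 < lam k)
    (hsum : Summable fun k => 1 / lam k) {T : ℝ} (hT : 0 < T)
    {F : ι → Lp ℝ 2 (volume.restrict (Ioo (0 : ℝ) T))}
    (hF : ∀ k, F k =ᵐ[volume.restrict (Ioo (0 : ℝ) T)] fun t => exp (-lam k * t))
    {n : ι} (hn : ∀ k, k ≠ n → lam k ≠ lam n) :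
    F n ∉ closure (span ℝ (F '' {n}ᶜ) : Set (Lp ℝ 2 (volume.restrict (Ioo (0 : ℝ) T)))) := by
  intro hmem
  have hsurj := LpToLpRestrictCLM_surjective (F := ℝ) (μ := volume) (p := 2)
    (measurableSet_Ioo (a := (0 : ℝ)) (b := T))
  choose e he using fun k => hsurj (F k)
  have he_exp (k : ι) : e k =ᵐ[volume.restrict (Ioo 0 T)] fun t => exp (-lam k * t) :=
    (LpToLpRestrictCLM_coeFn ℝ _ (e k)).symm.trans (he k ▸ hF k)
  have himage : F '' {n}ᶜ = LpToLpRestrictCLM ℝ ℝ ℝ volume 2 (Ioo 0 T) '' (e '' {n}ᶜ) := by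
    simp only [image_image, he]
  rw [himage, ← he n, ← ContinuousLinearMap.coe_coe, span_image] at hmem
  have hclosure := mem_closure_sup_ker_of_map_mem_closure hsurj hmem
  have hzero : distSpan e n {n}ᶜ T = 0 :=
    (mem_closure_iff_infDist_zero (Submodule.nonempty _)).1 hclosure
  exact (distSpan_compl_singleton_pos hpos hsum hT he_exp hn).ne' hzero

/-- Müntz-type non-density (Schwartz): if `(λ_k)` is strictly increasing,
positive, with `∑ 1/λ_k < ∞`, then in `L²(0,T)` the exponential `e^{-λ_n t}`
does not lie in the closure of the span of the remaining exponentials. -/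
theorem stmt3 (lam : ℕ+ → ℝ) (hmono : StrictMono lam)
    (hpos : ∀ k : ℕ+, 0 < lam k)
    (hsum : Summable fun k : ℕ+ => 1 / lam k)
    (T : ℝ) (hT : 0 < T)
    (F : ℕ+ → Lp ℝ 2 (volume.restrict (Ioo (0 : ℝ) T)))
    (hF : ∀ k : ℕ+,
      (F k : ℝ → ℝ) =ᵐ[volume.restrict (Ioo (0 : ℝ) T)]
        fun t => Real.exp (-lam k * t)) :
    ∀ n : ℕ+,
      F n ∉ closure
        ((Submodule.span ℝ {g | ∃ k : ℕ+, k ≠ n ∧ g = F k} :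
          Submodule ℝ (Lp ℝ 2 (volume.restrict (Ioo (0 : ℝ) T)))) :
          Set (Lp ℝ 2 (volume.restrict (Ioo (0 : ℝ) T)))) := by
  intro n
  simpa only [image, mem_compl_singleton_iff, eq_comm] using
    stmt3_general hpos hsum hT hF fun k hk => hmono.injective.ne hk
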